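/- Let c₁, c₂ ∈ ℚˣ, let B = ℍ[ℚ, c₁, c₂], let q be a prime number, let B_q = ℍ[ℚ_q, c₁, c₂] be the quaternion algebra over the field of q-adic numbers, and let ι : B → B_q be the natural ℚ-algebra homomorphism induced by ℚ ⊆ ℚ_q (which commutes with the standard involutions). Let O ⊆ B be a subring containing 1 and closed under star, and set Λ_O = {y ∈ O : y + star y = 0} ∩ (ℤ·1 + 2O). Let R_q be the ℤ_q-submodule of B_q spanned by ι(O). Then the ℤ_q-submodule of B_q spanned by ι(Λ_O) equals {x ∈ R_q : x + star x = 0} ∩ (ℤ_q·1 + 2R_q). -/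

import Mathlib

open NumberField Quaternion

/-
An element `x` of `ℤ·1 + 2O` with trace zero, say `x = a + 2y`, satisfies
`2x = x - star x = 2(y - star y)`, hence `x = y - star y`. Conversely `y - star y = 2y - tr y` lies
in `ℤ·1 + 2O` for every `y ∈ O`, because `tr y` lies in the subring `S = O ∩ ℚ` of `ℚ`, and every
such `S` equals `ℤ + 2S`. So `Λ_O` is the image of `O` under the linear map `y ↦ y - star y`, and
this map commutes with `ι` and with taking spans.
-/

section RatSubring

variable {S : Subring ℚ} {t : ℚ}

lemma inv_den_mem_of_mem_subring (ht : t ∈ S) : (t.den : ℚ)⁻¹ ∈ S := by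
  obtain ⟨x, y, hxy⟩ := Rat.isCoprime_num_den t
  have bezout : (x : ℚ) * t.num + y * t.den = 1 := mod_cast hxy
  have inv_den_eq : (t.den : ℚ)⁻¹ = x * t + y := by
    refine inv_eq_of_mul_eq_one_left ?_
    linear_combination bezout + x * t.mul_den_eq_num
  rw [inv_den_eq]
  exact S.add_mem (S.mul_mem (intCast_mem S x) ht) (intCast_mem S y)

lemma exists_eq_intCast_add_prime_mul_of_mem_subring {p : ℕ} (hp : p.Prime) (ht : t ∈ S) :
    ∃ n : ℤ, ∃ s ∈ S, t = n + p * s := by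
  by_cases hdvd : p ∣ t.den
  · obtain ⟨w, hw⟩ := hdvd
    refine ⟨0, t * (w * (t.den : ℚ)⁻¹),
      S.mul_mem ht (S.mul_mem (natCast_mem S w) (inv_den_mem_of_mem_subring ht)), ?_⟩
    have p_mul_inv : p * (w * (t.den : ℚ)⁻¹) = 1 := by
      rw [← mul_assoc, ← Nat.cast_mul, ← hw, mul_inv_cancel₀ (mod_cast t.den_ne_zero)]
    push_cast
    linear_combination -t * p_mul_inv
  · obtain ⟨x, y, hxy⟩ := Nat.isCoprime_iff_coprime.2 ((hp.coprime_iff_not_dvd).2 hdvd)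
    have bezout : (x : ℚ) * p + y * t.den = 1 := mod_cast hxy
    refine ⟨y * t.num, x * t, S.mul_mem (intCast_mem S x) ht, ?_⟩
    push_cast
    linear_combination -t * bezout + y * t.mul_den_eq_num

end RatSubring

lemma sub_star_mem_of_mem_span {R V : Type*} [Semiring R] [Star R] [TrivialStar R]
    [AddCommGroup V] [StarAddMonoid V] [Module R V] [StarModule R V] {s : Set V}
    {N : Submodule R V} (hs : ∀ x ∈ s, x - star x ∈ N) {y : V} (hy : y ∈ Submodule.span R s) :
    y - star y ∈ N := by
  induction hy using Submodule.span_induction with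
  | mem x hx => exact hs x hx
  | zero => simp
  | add x y _ _ hx hy =>
    rw [star_add, add_sub_add_comm]
    exact N.add_mem hx hy
  | smul r x _ hx =>
    rw [StarModule.star_smul, star_trivial, ← smul_sub]
    exact N.smul_mem r hx

section GrossLattice

variable {R A : Type*} [CommRing R] [StarRing R] [TrivialStar R]
  [Ring A] [StarRing A] [Algebra R A] [StarModule R A]

open scoped Pointwise in
/-- The Gross lattice `M⁰ ∩ (R·1 + 2M)` of an `R`-lattice `M` in an algebra with involution, where
`M⁰` denotes the elements of trace `x + star x = 0`, encoded as skew-adjoint elements. It is the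
common form of the two sides of the local-global comparison, over `ℤ` and over `ℤ_q`. -/
def grossLattice (M : Submodule R A) : Submodule R A :=
  M ⊓ skewAdjoint.submodule R A ⊓ (1 ⊔ (2 : R) • M)

lemma mem_grossLattice {M : Submodule R A} {x : A} :
    x ∈ grossLattice M ↔
      x ∈ M ∧ x + star x = 0 ∧ ∃ a : R, ∃ y ∈ M, x = algebraMap R A a + 2 * y := by
  have mem_skewAdjoint : x ∈ skewAdjoint.submodule R A ↔ x + star x = 0 := by
    rw [add_comm, ← eq_neg_iff_add_eq_zero]
    exact skewAdjoint.mem_iff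
  simp only [grossLattice, Submodule.mem_inf, mem_skewAdjoint, Submodule.mem_sup, Submodule.mem_one,
    Submodule.mem_smul_pointwise_iff_exists, exists_exists_eq_and, exists_exists_and_eq_and,
    ofNat_smul_eq_nsmul, nsmul_eq_mul, Nat.cast_ofNat, and_assoc, eq_comm (a := x)]

lemma coe_grossLattice (M : Submodule R A) :
    (grossLattice M : Set A) =
      {x | x ∈ M ∧ x + star x = 0 ∧ ∃ a : R, ∃ y ∈ M, x = algebraMap R A a + 2 * y} :=
  Set.ext fun _ ↦ mem_grossLattice

lemma exists_eq_sub_star_of_mem_grossLattice [IsAddTorsionFree A] {M : Submodule R A} {x : A}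
    (hx : x ∈ grossLattice M) : ∃ y ∈ M, x = y - star y := by
  obtain ⟨-, trace_zero, a, y, hy, x_eq⟩ := mem_grossLattice.1 hx
  refine ⟨y, hy, nsmul_right_injective two_ne_zero ?_⟩
  have star_eq : star x = algebraMap R A a + 2 * star y := by
    rw [x_eq, star_add, ← algebraMap_star_comm, star_trivial, two_mul, star_add, ← two_mul]
  calc
    2 • x = x - star x := by rw [two_nsmul, ← add_eq_zero_iff_neg_eq.1 trace_zero, sub_neg_eq_add]
    _ = 2 * y - 2 * star y := by rw [star_eq, x_eq, add_sub_add_left_eq_sub]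
    _ = 2 • (y - star y) := by rw [← mul_sub, two_mul, two_nsmul]

lemma map_mem_grossLattice_span {R₀ B : Type*} [CommRing R₀] [StarRing R₀] [TrivialStar R₀]
    [Ring B] [StarRing B] [Algebra R₀ B] [StarModule R₀ B] [Algebra R₀ R] [Algebra R₀ A]
    [IsScalarTower R₀ R A] (ι : B →⋆ₐ[R₀] A) {M : Submodule R₀ B} {x : B}
    (hx : x ∈ grossLattice M) : ι x ∈ grossLattice (Submodule.span R (ι '' M)) := by
  obtain ⟨hxM, trace_zero, a, y, hy, x_eq⟩ := mem_grossLattice.1 hx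
  refine mem_grossLattice.2 ⟨Submodule.subset_span (Set.mem_image_of_mem ι hxM), ?_,
    algebraMap R₀ R a, ι y, Submodule.subset_span (Set.mem_image_of_mem ι hy), ?_⟩
  · rw [← map_star, ← map_add, trace_zero, map_zero]
  · rw [x_eq, map_add, map_mul, map_ofNat, AlgHomClass.commutes,
      ← IsScalarTower.algebraMap_apply]

end GrossLattice

section RationalTrace

variable {B : Type*} [Ring B] [StarRing B] [Algebra ℚ B]

lemma sub_star_mem_grossLattice (htr : ∀ x : B, x + star x ∈ (algebraMap ℚ B).range)
    {O : Subring B} (hO : ∀ x ∈ O, star x ∈ O) {y : B} (hy : y ∈ O) :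
    y - star y ∈ grossLattice O.toAddSubgroup.toIntSubmodule := by
  obtain ⟨t, trace_eq⟩ := htr y
  have ht : t ∈ O.comap (algebraMap ℚ B) := by
    rw [Subring.mem_comap, trace_eq]
    exact O.add_mem hy (hO y hy)
  obtain ⟨n, s, hs, t_eq⟩ := exists_eq_intCast_add_prime_mul_of_mem_subring Nat.prime_two ht
  rw [t_eq, map_add, map_mul, map_intCast, map_natCast, Nat.cast_ofNat] at trace_eq
  refine mem_grossLattice.2 ⟨O.sub_mem hy (hO y hy), ?_,
    -n, y - algebraMap ℚ B s, O.sub_mem hy hs, ?_⟩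
  · rw [star_sub, star_star, sub_add_sub_cancel, sub_self]
  · rw [eq_sub_of_add_eq' trace_eq.symm, algebraMap_int_eq, eq_intCast, Int.cast_neg]
    noncomm_ring

theorem stmt8_general {R C : Type*} [CommRing R] [StarRing R] [TrivialStar R]
    [Ring C] [StarRing C] [Algebra ℚ C] [Algebra R C] [StarModule R C]
    (htr : ∀ x : B, x + star x ∈ (algebraMap ℚ B).range) (ι : B →⋆ₐ[ℚ] C)
    (O : Subring B) (hO : ∀ x ∈ O, star x ∈ O) :
    Submodule.span R (ι '' grossLattice O.toAddSubgroup.toIntSubmodule) =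
      grossLattice (Submodule.span R (ι '' O)) := by
  have : IsAddTorsionFree C := .of_module_rat C
  refine le_antisymm (Submodule.span_le.2 ?_) fun x hx ↦ ?_
  · rintro _ ⟨x, hx, rfl⟩
    exact map_mem_grossLattice_span (M := O.toAddSubgroup.toIntSubmodule)
      (ι.restrictScalars ℤ) hx
  · obtain ⟨y, hy, rfl⟩ := exists_eq_sub_star_of_mem_grossLattice hx
    refine sub_star_mem_of_mem_span ?_ hy
    rintro _ ⟨o, ho, rfl⟩
    rw [← map_star, ← map_sub]
    exact Submodule.subset_span (Set.mem_image_of_mem ι (sub_star_mem_grossLattice htr hO ho))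

end RationalTrace

lemma map_star_of_coordinatewise {R S : Type*} [CommRing R] [CommRing S] {c₁ c₂ : R} {d₁ d₂ : S}
    (f : R →+ S) {ι : ℍ[R,c₁,c₂] → ℍ[S,d₁,d₂]}
    (hι : ∀ x, ι x = ⟨f x.re, f x.imI, f x.imJ, f x.imK⟩) (x : ℍ[R,c₁,c₂]) :
    ι (star x) = star (ι x) := by
  rw [hι, hι]
  ext <;> simp

/-- Let `B = ℍ[ℚ, c₁, c₂]`, `q` a prime, `B_q = ℍ[ℚ_q, c₁, c₂]` and `ι : B → B_q`
the natural map. Let `O ⊆ B` be a star-stable subring and `Λ_O = O⁰ ∩ (ℤ·1 + 2O)`.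
If `R_q` is the `ℤ_q`-span of `ι(O)`, then the `ℤ_q`-span of `ι(Λ_O)` equals
`{x ∈ R_q : x + star x = 0} ∩ (ℤ_q·1 + 2R_q)`. -/
theorem stmt8 (c₁ c₂ : ℚ) (hc₁ : c₁ ≠ 0) (hc₂ : c₂ ≠ 0)
    (q : ℕ) [Fact q.Prime]
    (ι : ℍ[ℚ, c₁, c₂] →ₐ[ℚ]
      ℍ[ℚ_[q], algebraMap ℚ ℚ_[q] c₁, algebraMap ℚ ℚ_[q] c₂])
    (hι : ∀ x : ℍ[ℚ, c₁, c₂], ι x =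
      ⟨algebraMap ℚ ℚ_[q] x.re, algebraMap ℚ ℚ_[q] x.imI, algebraMap ℚ ℚ_[q] x.imJ,
        algebraMap ℚ ℚ_[q] x.imK⟩)
    (O : Subring ℍ[ℚ, c₁, c₂]) (hO : ∀ x ∈ O, star x ∈ O)
    (Λ : Set ℍ[ℚ, c₁, c₂])
    (hΛ : Λ = {y : ℍ[ℚ, c₁, c₂] | y ∈ O ∧ y + star y = 0 ∧
      ∃ n : ℤ, ∃ z ∈ O, y = (n : ℍ[ℚ, c₁, c₂]) + 2 * z})
    (Rq : Submodule ℤ_[q] ℍ[ℚ_[q], algebraMap ℚ ℚ_[q] c₁, algebraMap ℚ ℚ_[q] c₂])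
    (hRq : Rq = Submodule.span ℤ_[q] (ι '' (O : Set ℍ[ℚ, c₁, c₂]))) :
    (Submodule.span ℤ_[q] (ι '' Λ) : Set _)
      = {x : ℍ[ℚ_[q], algebraMap ℚ ℚ_[q] c₁, algebraMap ℚ ℚ_[q] c₂] |
          x ∈ Rq ∧ x + star x = 0 ∧
          ∃ a : ℤ_[q], ∃ y ∈ Rq,
            x = algebraMap ℤ_[q] ℍ[ℚ_[q], algebraMap ℚ ℚ_[q] c₁, algebraMap ℚ ℚ_[q] c₂] a
              + 2 * y} := by
  let : StarRing ℤ_[q] := starRingOfComm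
  have : TrivialStar ℤ_[q] := ⟨fun _ ↦ rfl⟩
  have : StarModule ℤ_[q] ℍ[ℚ_[q], algebraMap ℚ ℚ_[q] c₁, algebraMap ℚ ℚ_[q] c₂] :=
    ⟨QuaternionAlgebra.star_smul'⟩
  let ιStar : ℍ[ℚ,c₁,c₂] →⋆ₐ[ℚ] ℍ[ℚ_[q],algebraMap ℚ ℚ_[q] c₁,algebraMap ℚ ℚ_[q] c₂] :=
    { ι with map_star' := map_star_of_coordinatewise (algebraMap ℚ ℚ_[q]).toAddMonoidHom hι }
  have Λ_eq : Λ = grossLattice O.toAddSubgroup.toIntSubmodule := by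
    rw [hΛ, coe_grossLattice]
    rfl
  rw [hRq, Λ_eq, ← coe_grossLattice]
  exact congrArg SetLike.coe (stmt8_general (fun x ↦ ⟨_, x.self_add_star'.symm⟩) ιStar O hO)
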